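/- Let $f_1,\dots,f_m$ be homogeneous polynomials of degree $d$ in $\mathbb{C}[z_0,\dots,z_n]$ with no common zero in $\mathbb{P}^n$, and let $\phi$ be a homogeneous polynomial of degree $\rho \ge (n+1)d - n$ (equivalently $\rho \ge (d-1)(n+1) + 1$). Then there exist homogeneous polynomials $q_1,\dots,q_m$ of degree $\rho - d$ such that $f_1 q_1 + \cdots + f_m q_m = \phi$. -/

import Mathlib

open MvPolynomial

namespace Mac

variable {σ : Type*}

lemma hc_mul {a : MvPolynomial σ ℂ} {d : ℕ} (ha : a.IsHomogeneous d) (v : MvPolynomial σ ℂ) (t : ℕ) :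
    homogeneousComponent t (a * v) =
      if d ≤ t then a * homogeneousComponent (t - d) v else 0 := by
  have key : ∀ i, homogeneousComponent t (a * homogeneousComponent i v) =
      if t = d + i then a * homogeneousComponent i v else 0 := fun i =>
    homogeneousComponent_of_mem (ha.mul (homogeneousComponent_isHomogeneous i v))
  conv_lhs => rw [← sum_homogeneousComponent v, Finset.mul_sum, map_sum]
  simp only [key]
  split_ifs with h
  · by_cases h2 : t - d ∈ Finset.range (v.totalDegree + 1)
    · rw [Finset.sum_eq_single_of_mem (t - d) h2]
      · rw [if_pos (by omega)]
      · intro b _ hb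
        rw [if_neg (by omega)]
    · rw [homogeneousComponent_eq_zero (t - d) v (by simp at h2; omega), mul_zero]
      apply Finset.sum_eq_zero
      intro b hb
      rw [if_neg]
      rintro rfl
      apply h2
      simpa using hb
  · apply Finset.sum_eq_zero
    intro b hb
    rw [if_neg (by omega)]

lemma hc_mul_add {a : MvPolynomial σ ℂ} {d : ℕ} (ha : a.IsHomogeneous d) (v : MvPolynomial σ ℂ)
    (t : ℕ) : homogeneousComponent (d + t) (a * v) = a * homogeneousComponent t v := by
  rw [hc_mul ha, if_pos (by omega)]; simp

/-- homogeneous ideal -/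
def HomI (J : Ideal (MvPolynomial σ ℂ)) : Prop :=
  ∀ u ∈ J, ∀ t, homogeneousComponent t u ∈ J

/-- nonzerodivisor modulo an ideal -/
def NZ (J : Ideal (MvPolynomial σ ℂ)) (r : MvPolynomial σ ℂ) : Prop :=
  ∀ u, r * u ∈ J → u ∈ J

lemma mem_of_hc {J : Ideal (MvPolynomial σ ℂ)} {u : MvPolynomial σ ℂ}
    (h : ∀ t, homogeneousComponent t u ∈ J) : u ∈ J := by
  rw [← sum_homogeneousComponent u]
  exact J.sum_mem fun i _ => h i

lemma mem_sup_span {J : Ideal (MvPolynomial σ ℂ)} {a u : MvPolynomial σ ℂ} :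
    u ∈ J ⊔ Ideal.span {a} ↔ ∃ j ∈ J, ∃ v, u = j + a * v := by
  rw [Submodule.mem_sup]
  constructor
  · rintro ⟨j, hj, y, hy, rfl⟩
    obtain ⟨v, rfl⟩ := Ideal.mem_span_singleton.1 hy
    exact ⟨j, hj, v, rfl⟩
  · rintro ⟨j, hj, v, rfl⟩
    exact ⟨j, hj, _, Ideal.mem_span_singleton.2 ⟨v, rfl⟩, rfl⟩

lemma HomI.sup {J : Ideal (MvPolynomial σ ℂ)} (hJ : HomI J) {a : MvPolynomial σ ℂ} {d : ℕ}
    (ha : a.IsHomogeneous d) : HomI (J ⊔ Ideal.span {a}) := by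
  intro u hu t
  obtain ⟨j, hj, v, rfl⟩ := mem_sup_span.1 hu
  rw [map_add, hc_mul ha]
  split_ifs
  · exact mem_sup_span.2 ⟨_, hJ j hj t, _, rfl⟩
  · exact mem_sup_span.2 ⟨_, hJ j hj t, 0, by simp⟩

lemma nz_of_hom {J : Ideal (MvPolynomial σ ℂ)} (hJ : HomI J) {r : MvPolynomial σ ℂ} {d : ℕ}
    (hr : r.IsHomogeneous d)
    (h : ∀ t u, u.IsHomogeneous t → r * u ∈ J → u ∈ J) : NZ J r := by
  intro u hu
  apply mem_of_hc
  intro t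
  apply h t _ (homogeneousComponent_isHomogeneous t u)
  rw [← hc_mul_add hr]
  exact hJ _ hu _

lemma swap1 {J : Ideal (MvPolynomial σ ℂ)} (hJ : HomI J) {a b : MvPolynomial σ ℂ} {d e : ℕ}
    (ha : a.IsHomogeneous d) (hd : 0 < d) (hb : b.IsHomogeneous e)
    (h1 : NZ J a) (h2 : NZ (J ⊔ Ideal.span {a}) b) : NZ J b := by
  apply nz_of_hom hJ hb
  intro t
  induction t using Nat.strong_induction_on with
  | _ t ih =>
  intro u hu hbu
  obtain ⟨j, hj, v, huv⟩ := mem_sup_span.1 (h2 u ((le_sup_left : J ≤ J ⊔ Ideal.span {a}) hbu))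
  have h3 := congrArg (homogeneousComponent t) huv
  rw [homogeneousComponent_eq_self hu, map_add, hc_mul ha] at h3
  split_ifs at h3 with hdt
  · rw [h3]
    refine J.add_mem (hJ j hj t) (J.mul_mem_left _ ?_)
    apply ih (t - d) (by omega) _ (homogeneousComponent_isHomogeneous _ _)
    apply h1
    have : a * (b * homogeneousComponent (t - d) v) = b * u - b * homogeneousComponent t j := by
      rw [h3]; ring
    rw [this]
    exact J.sub_mem hbu (J.mul_mem_left _ (hJ j hj t))
  · rw [h3, add_zero]
    exact hJ j hj t

lemma swap2 {J : Ideal (MvPolynomial σ ℂ)} {a b : MvPolynomial σ ℂ}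
    (h1 : NZ J a) (h2 : NZ (J ⊔ Ideal.span {a}) b) : NZ (J ⊔ Ideal.span {b}) a := by
  intro u hu
  obtain ⟨j, hj, v, huv⟩ := mem_sup_span.1 hu
  have : v ∈ J ⊔ Ideal.span {a} := by
    apply h2
    refine mem_sup_span.2 ⟨-j, J.neg_mem hj, u, ?_⟩
    rw [huv]; ring
  obtain ⟨j', hj', w, rfl⟩ := mem_sup_span.1 this
  refine mem_sup_span.2 ⟨u - b * w, ?_, w, by ring⟩
  apply h1
  have : a * (u - b * w) = j + b * j' := by
    rw [mul_sub, huv]; ring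
  rw [this]
  exact J.add_mem hj (J.mul_mem_left _ hj')

/-- regular sequence modulo an ideal -/
def Reg : Ideal (MvPolynomial σ ℂ) → List (MvPolynomial σ ℂ) → Prop
  | _, [] => True
  | J, r :: rs => NZ J r ∧ Reg (J ⊔ Ideal.span {r}) rs

lemma reg_append (L : List (MvPolynomial σ ℂ)) : ∀ (J : Ideal (MvPolynomial σ ℂ)) (r),
    Reg J (L ++ [r]) ↔ Reg J L ∧ NZ (J ⊔ Ideal.ofList L) r := by
  induction L with
  | nil => intro J r; simp [Reg]
  | cons a L ih =>
    intro J r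
    simp only [List.cons_append, Reg, ih, Ideal.ofList_cons, sup_assoc, and_assoc]

lemma reg_rotate {g : MvPolynomial σ ℂ} {e : ℕ} (hg : g.IsHomogeneous e)
    (L : List (MvPolynomial σ ℂ)) : ∀ (J : Ideal (MvPolynomial σ ℂ)), HomI J →
    (∀ a ∈ L, a.IsHomogeneous 1) → Reg J L → NZ (J ⊔ Ideal.ofList L) g →
    NZ J g ∧ Reg (J ⊔ Ideal.span {g}) L := by
  induction L with
  | nil => intro J _ _ _ h; simpa [Reg] using h
  | cons a L ih =>
    intro J hJ hL hR hN
    have ha : a.IsHomogeneous 1 := hL a (by simp)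
    obtain ⟨h1, h2⟩ := ih (J ⊔ Ideal.span {a}) (hJ.sup ha) (fun b hb => hL b (by simp [hb])) hR.2
      (by simpa [Ideal.ofList_cons, sup_assoc] using hN)
    refine ⟨swap1 hJ ha one_pos hg hR.1 h1, swap2 hR.1 h1, ?_⟩
    rwa [sup_right_comm]

lemma homI_ofList (L : List (MvPolynomial σ ℂ)) : ∀ (J : Ideal (MvPolynomial σ ℂ)), HomI J →
    (∀ a ∈ L, a.IsHomogeneous 1) → HomI (J ⊔ Ideal.ofList L) := by
  induction L with
  | nil => intro J h _; simpa using h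
  | cons a L ih =>
    intro J hJ hL
    rw [Ideal.ofList_cons, ← sup_assoc]
    exact ih _ (hJ.sup (hL a (by simp))) (fun b hb => hL b (by simp [hb]))

/-- graded piece of the quotient -/
noncomputable def V (J : Ideal (MvPolynomial σ ℂ)) (t : ℕ) : Submodule ℂ (MvPolynomial σ ℂ ⧸ J) :=
  (homogeneousSubmodule σ ℂ t).map (Ideal.Quotient.mkₐ ℂ J).toLinearMap

instance [Finite σ] (J : Ideal (MvPolynomial σ ℂ)) (t : ℕ) : FiniteDimensional ℂ (V J t) := by
  have : homogeneousSubmodule σ ℂ t ≤ restrictTotalDegree σ ℂ t := by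
    intro p hp
    rw [mem_restrictTotalDegree]
    exact IsHomogeneous.totalDegree_le hp
  have h2 : FiniteDimensional ℂ (homogeneousSubmodule σ ℂ t) :=
    Submodule.finiteDimensional_of_le this
  unfold V
  infer_instance

lemma mem_V {J : Ideal (MvPolynomial σ ℂ)} {t : ℕ} {y : MvPolynomial σ ℂ ⧸ J} :
    y ∈ V J t ↔ ∃ u : MvPolynomial σ ℂ, u.IsHomogeneous t ∧ Ideal.Quotient.mk J u = y := by
  simp [V, Submodule.mem_map, mem_homogeneousSubmodule]

/-- the image of multiplication -/
noncomputable def W (J : Ideal (MvPolynomial σ ℂ)) (r : MvPolynomial σ ℂ) (t : ℕ) :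
    Submodule ℂ (MvPolynomial σ ℂ ⧸ J) :=
  (V J t).map (LinearMap.mulLeft ℂ (Ideal.Quotient.mk J r))

lemma mem_W {J : Ideal (MvPolynomial σ ℂ)} {t : ℕ} {r : MvPolynomial σ ℂ}
    {y : MvPolynomial σ ℂ ⧸ J} :
    y ∈ W J r t ↔ ∃ u : MvPolynomial σ ℂ, u.IsHomogeneous t ∧ Ideal.Quotient.mk J (r * u) = y := by
  simp only [W, Submodule.mem_map, mem_V]
  constructor
  · rintro ⟨_, ⟨u, hu, rfl⟩, rfl⟩
    exact ⟨u, hu, by simp⟩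
  · rintro ⟨u, hu, rfl⟩
    exact ⟨_, ⟨u, hu, rfl⟩, by simp⟩

lemma W_le {J : Ideal (MvPolynomial σ ℂ)} {t d : ℕ} {r : MvPolynomial σ ℂ}
    (hr : r.IsHomogeneous d) : W J r t ≤ V J (d + t) := by
  intro y hy
  obtain ⟨u, hu, rfl⟩ := mem_W.1 hy
  exact mem_V.2 ⟨_, hr.mul hu, rfl⟩

lemma finrank_W {J : Ideal (MvPolynomial σ ℂ)} {t : ℕ} {r : MvPolynomial σ ℂ}
    (hr : NZ J r) : Module.finrank ℂ (W J r t) = Module.finrank ℂ (V J t) := by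
  apply LinearEquiv.finrank_eq
  refine (Submodule.equivMapOfInjective _ ?_ _).symm
  rw [← LinearMap.ker_eq_bot, LinearMap.ker_eq_bot']
  intro y hy
  obtain ⟨u, rfl⟩ := Ideal.Quotient.mk_surjective y
  rw [LinearMap.mulLeft_apply, ← map_mul, Ideal.Quotient.eq_zero_iff_mem] at hy
  exact Ideal.Quotient.eq_zero_iff_mem.2 (hr u hy)

lemma step {σ : Type*} [Finite σ] {J : Ideal (MvPolynomial σ ℂ)} (hJ : HomI J)
    {x g : MvPolynomial σ ℂ}
    {e T : ℕ} (hx : x.IsHomogeneous 1) (hg : g.IsHomogeneous (e + 1)) (hxN : NZ J x) (hgN : NZ J g)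
    (hT : ∀ t u, T + 1 ≤ t → u.IsHomogeneous t → u ∈ J ⊔ Ideal.span {x}) :
    ∀ t u, T + e + 1 ≤ t → u.IsHomogeneous t → u ∈ J ⊔ Ideal.span {g} := by
  have h1 : ∀ t, T ≤ t → Module.finrank ℂ (V J (t + 1)) = Module.finrank ℂ (V J t) := by
    intro t ht
    suffices hVW : V J (1 + t) = W J x t by
      rw [← finrank_W (t := t) hxN, add_comm t 1, hVW]
    refine (le_antisymm (W_le hx) ?_).symm
    intro y hy
    obtain ⟨u, hu, rfl⟩ := mem_V.1 hy
    obtain ⟨j, hj, v, huv⟩ := mem_sup_span.1 (hT _ u (by omega) hu)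
    have h3 := congrArg (homogeneousComponent (1 + t)) huv
    rw [homogeneousComponent_eq_self hu, map_add, hc_mul_add hx] at h3
    refine mem_W.2 ⟨_, homogeneousComponent_isHomogeneous t v, ?_⟩
    rw [h3, map_add, Ideal.Quotient.eq_zero_iff_mem.2 (hJ j hj _), zero_add]
  have h2 : ∀ k t, T ≤ t → Module.finrank ℂ (V J (t + k)) = Module.finrank ℂ (V J t) := by
    intro k t ht
    induction k with
    | zero => rfl
    | succ k ih => rw [← add_assoc, h1 _ (by omega), ih]
  intro t u ht hu
  obtain ⟨s, rfl⟩ : ∃ s, t = (e + 1) + s := ⟨t - (e + 1), by omega⟩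
  have h3 : W J g s = V J (e + 1 + s) := by
    apply Submodule.eq_of_le_of_finrank_eq (W_le hg)
    rw [finrank_W hgN, add_comm (e + 1) s, h2 _ _ (by omega)]
  have h4 : Ideal.Quotient.mk J u ∈ W J g s := by
    rw [h3]; exact mem_V.2 ⟨u, hu, rfl⟩
  obtain ⟨v, _, hv⟩ := mem_W.1 h4
  refine mem_sup_span.2 ⟨u - g * v, ?_, v, by ring⟩
  exact Ideal.Quotient.eq.1 hv.symm

lemma avoid {σ : Type*} [Finite σ] {m d : ℕ} {f : Fin m → MvPolynomial σ ℂ}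
    (hf : ∀ i, (f i).IsHomogeneous d) {J : Ideal (MvPolynomial σ ℂ)} {x : MvPolynomial σ ℂ}
    (hx : x ∈ (Ideal.span (Set.range f)).radical) (hxN : NZ J x) :
    ∃ g, g.IsHomogeneous d ∧ g ∈ Ideal.span (Set.range f) ∧ NZ J g := by
  let A := associatedPrimes (MvPolynomial σ ℂ) (MvPolynomial σ ℂ ⧸ J)
  have hfin : A.Finite := associatedPrimes.finite _ _
  have : Finite A := hfin
  let Φ : (Fin m → ℂ) →ₗ[ℂ] MvPolynomial σ ℂ := Fintype.linearCombination ℂ f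
  let p : A → Submodule ℂ (Fin m → ℂ) := fun P => (P.1.restrictScalars ℂ).comap Φ
  have hne : ⋃ i, (p i : Set (Fin m → ℂ)) ≠ Set.univ := by
    intro h
    obtain ⟨P, hP⟩ := Subspace.exists_eq_top_of_iUnion_eq_univ h
    obtain ⟨hPp, y, hy⟩ := (isAssociatedPrime_iff).1 P.2
    have hfP : ∀ i, f i ∈ P.1 := by
      intro i
      have : Pi.single i 1 ∈ p P := by rw [hP]; trivial
      simpa [p, Φ, Fintype.linearCombination_apply_single] using this
    have hxP : x ∈ P.1 := by
      have : (Ideal.span (Set.range f)).radical ≤ P.1 := by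
        rw [hPp.radical_le_iff, Ideal.span_le]
        rintro _ ⟨i, rfl⟩
        exact hfP i
      exact this hx
    obtain ⟨u, rfl⟩ := Ideal.Quotient.mk_surjective y
    have hu : u ∈ J := by
      apply hxN
      rw [hy] at hxP
      rw [← Ideal.Quotient.eq_zero_iff_mem]
      have h0 : x • (Ideal.Quotient.mk J u) = 0 := by
        simpa [Submodule.mem_colon_singleton] using hxP
      exact h0
    apply hPp.ne_top
    rw [hy, Ideal.Quotient.eq_zero_iff_mem.2 hu]
    simp
  obtain ⟨c, hc⟩ := (Set.ne_univ_iff_exists_notMem _).1 hne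
  have hΦ : Φ c = ∑ i, c i • f i := Fintype.linearCombination_apply ..
  refine ⟨Φ c, ?_, ?_, ?_⟩
  · rw [hΦ, ← mem_homogeneousSubmodule]
    exact Submodule.sum_mem _ fun i _ => Submodule.smul_mem _ _ (hf i)
  · rw [hΦ]
    refine Submodule.sum_mem _ fun i _ => ?_
    rw [smul_eq_C_mul]
    exact Ideal.mul_mem_left _ _ (Ideal.subset_span ⟨i, rfl⟩)
  · intro u hu
    by_contra hcon
    have : Φ c ∈ ⋃ p ∈ associatedPrimes (MvPolynomial σ ℂ) (MvPolynomial σ ℂ ⧸ J),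
        (p : Set (MvPolynomial σ ℂ)) := by
      rw [biUnion_associatedPrimes_eq_zero_divisors]
      refine ⟨Ideal.Quotient.mk J u, by rwa [Ne, Ideal.Quotient.eq_zero_iff_mem], ?_⟩
      exact Ideal.Quotient.eq_zero_iff_mem.2 hu
    simp only [Set.mem_iUnion] at this hc
    obtain ⟨P, hP, h⟩ := this
    exact hc ⟨⟨P, hP⟩, h⟩

lemma main {σ : Type*} [Finite σ] {m e : ℕ} {f : Fin m → MvPolynomial σ ℂ}
    (hf : ∀ i, (f i).IsHomogeneous (e + 1)) (L : List (MvPolynomial σ ℂ)) :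
    (∀ a ∈ L, a.IsHomogeneous 1 ∧ a ∈ (Ideal.span (Set.range f)).radical) →
    ∀ (G : Ideal (MvPolynomial σ ℂ)) (T : ℕ), HomI G → G ≤ Ideal.span (Set.range f) → Reg G L →
    (∀ t u, T + 1 ≤ t → u.IsHomogeneous t → u ∈ G ⊔ Ideal.ofList L) →
    ∀ t u, T + L.length * e + 1 ≤ t → u.IsHomogeneous t → u ∈ Ideal.span (Set.range f) := by
  induction L using List.reverseRecOn with
  | nil =>
    intro _ G T _ hG _ hT t u ht hu
    exact hG (by simpa using hT t u (by simpa using ht) hu)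
  | append_singleton L x ih =>
    intro hL G T hG hGI hR hT t u ht hu
    have hL' : ∀ a ∈ L, a.IsHomogeneous 1 := fun a ha => (hL a (by simp [ha])).1
    obtain ⟨hx, hxr⟩ := hL x (by simp)
    rw [reg_append] at hR
    have hJ := homI_ofList L G hG hL'
    obtain ⟨g, hg, hgI, hgN⟩ := avoid hf hxr hR.2
    obtain ⟨h1, h2⟩ := reg_rotate hg L G hG hL' hR.1 hgN
    refine ih (fun a ha => hL a (by simp [ha])) (G ⊔ Ideal.span {g}) (T + e) (hG.sup hg) ?_ h2 ?_
      t u ?_ hu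
    · refine sup_le hGI ?_
      rw [Ideal.span_le]; simpa using hgI
    · rw [sup_right_comm]
      apply step hJ hx hg hR.2 hgN
      simpa [Ideal.ofList_append, sup_assoc] using hT
    · simp at ht
      linarith

lemma nz_X (s : Set σ) (j : σ) (hj : j ∉ s) : NZ (Ideal.span (X '' s)) (X j : MvPolynomial σ ℂ) := by
  intro u hu
  rw [mem_ideal_span_X_image] at hu ⊢
  intro k hk
  obtain ⟨i, hi, h⟩ := hu (Finsupp.single j 1 + k) (by
    rw [mem_support_iff, coeff_X_mul]; exact mem_support_iff.1 hk)
  refine ⟨i, hi, ?_⟩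
  have : j ≠ i := by rintro rfl; exact hj hi
  simpa [Finsupp.single_apply, this] using h

lemma reg_X (l : List σ) : ∀ s : Set σ, l.Nodup → (∀ i ∈ l, i ∉ s) →
    Reg (Ideal.span (X '' s)) (l.map (X : σ → MvPolynomial σ ℂ)) := by
  induction l with
  | nil => intros; trivial
  | cons a l ih =>
    intro s hl hs
    refine ⟨nz_X s a (hs a (by simp)), ?_⟩
    rw [← Ideal.span_union]
    have := ih (insert a s) (List.nodup_cons.1 hl).2 (by
      intro i hi
      rw [Set.mem_insert_iff, not_or]
      refine ⟨?_, hs i (by simp [hi])⟩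
      rintro rfl
      exact (List.nodup_cons.1 hl).1 hi)
    rwa [Set.image_insert_eq, ← Set.union_singleton] at this

end Mac

theorem stmt11 (n m d ρ : ℕ)
    (f : Fin m → MvPolynomial (Fin (n + 1)) ℂ)
    (hf : ∀ i, (f i).IsHomogeneous d)
    (hnozero : ∀ z : Fin (n + 1) → ℂ, z ≠ 0 → ∃ i, eval z (f i) ≠ 0)
    (φ : MvPolynomial (Fin (n + 1)) ℂ) (hφ : φ.IsHomogeneous ρ)
    (hρ : (n + 1) * d ≤ ρ + n) :
    ∃ q : Fin m → MvPolynomial (Fin (n + 1)) ℂ,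
      (∀ i, (q i).IsHomogeneous (ρ - d)) ∧ ∑ i, f i * q i = φ := by
  have hdρ : d ≤ ρ := by
    rcases d with _ | e
    · omega
    · nlinarith [Nat.zero_le (n * e)]
  have hmem : φ ∈ Ideal.span (Set.range f) := by
    rcases d with _ | e
    · obtain ⟨i, hi⟩ := hnozero (fun _ => 1) (fun h => one_ne_zero (congrFun h 0))
      have hc : f i = C (coeff 0 (f i)) :=
        totalDegree_eq_zero_iff_eq_C.1 (Nat.le_zero.1 (hf i).totalDegree_le)
      rw [hc, eval_C] at hi
      have : Ideal.span (Set.range f) = ⊤ := by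
        apply Ideal.eq_top_of_isUnit_mem _ (Ideal.subset_span (Set.mem_range_self i))
        rw [hc]
        exact (isUnit_iff_ne_zero.2 hi).map C
      rw [this]; trivial
    · have hrad : ∀ j, (X j : MvPolynomial (Fin (n + 1)) ℂ) ∈
          (Ideal.span (Set.range f)).radical := by
        intro j
        rw [← vanishingIdeal_zeroLocus_eq_radical (K := ℂ), mem_vanishingIdeal_iff]
        intro z hz
        have : z = 0 := by
          by_contra hne
          obtain ⟨i, hi⟩ := hnozero z hne
          apply hi
          have := (mem_zeroLocus_iff.1 hz) (f i) (Ideal.subset_span ⟨i, rfl⟩)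
          simpa [aeval_eq_eval] using this
        simp [this]
      refine Mac.main hf ((List.finRange (n + 1)).map X) ?_ (Ideal.span (X '' (∅ : Set (Fin (n+1))))) 0
        ?_ ?_ ?_ ?_ ρ φ ?_ hφ
      · intro a ha
        obtain ⟨j, _, rfl⟩ := List.mem_map.1 ha
        exact ⟨isHomogeneous_X _ _, hrad j⟩
      · intro u hu t
        have : u = 0 := by simpa using hu
        simp [this]
      · simp
      · exact Mac.reg_X _ _ (List.nodup_finRange _) (by simp)
      · intro t u ht hu
        refine Ideal.mem_sup_right ?_
        have : Ideal.ofList ((List.finRange (n + 1)).map (X : _ → MvPolynomial (Fin (n + 1)) ℂ)) =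
            Ideal.span (X '' Set.univ) := by
          unfold Ideal.ofList
          congr 1
          ext; simp
        rw [this, mem_ideal_span_X_image]
        intro k hk
        by_contra hcon
        push Not at hcon
        have hk0 : k = 0 := by ext i; exact hcon i trivial
        have := hu (mem_support_iff.1 hk)
        rw [hk0] at this
        simp at this
        omega
      · simp
        nlinarith
  obtain ⟨c, hc⟩ := (Ideal.mem_span_range_iff_exists_fun).1 hmem
  refine ⟨fun i => homogeneousComponent (ρ - d) (c i),
    fun i => homogeneousComponent_isHomogeneous _ _, ?_⟩
  have h := congrArg (homogeneousComponent ρ) hc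
  rw [homogeneousComponent_eq_self hφ, map_sum] at h
  rw [← h]
  refine Finset.sum_congr rfl fun i _ => ?_
  rw [mul_comm (c i), Mac.hc_mul (hf i), if_pos hdρ]
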